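/- arXiv:1509.07852 — 5 statements merged into one kernel-verified Lean document; each statement's English description precedes it below -/
import Mathlib

section
/- Let q, x be complex numbers with |q| < 1 and |x| < 1. Then the series ∑_{n=0}^∞ x^n/(q;q)_n converges and equals the convergent infinite product ∏_{k=0}^∞ (1 - x q^k)^{-1} (Euler's q-exponential identity, underlying the computation of the q-hypergeometric function of a point). -/
/-!
Write `F(x) = ∑ x ^ n / (q;q)_n`. Since `(1 - q ^ n) / (q;q)_n = 1 / (q;q)_{n-1}` for `n ≥ 1`,
comparing coefficients gives `F(x) - F(xq) = x F(x)`, that is `F(x) = (1 - x)⁻¹ F(xq)`.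
Iterating, `F(x) = (∏_{k < N} (1 - x q ^ k)⁻¹) F(x q ^ N)`, and `F(x q ^ N) → F(0) = 1` by dominated
convergence. The series converges by the ratio test, the product because
`(1 - y)⁻¹ = 1 + y / (1 - y)` with `y = x q ^ k` geometrically small.
-/

/-- The q-Pochhammer symbol `(q;q)_n = ∏_{r=1}^n (1 - q^r)`. -/
noncomputable def qPoch (q : ℂ) (n : ℕ) : ℂ :=
  ∏ r ∈ Finset.range n, (1 - q ^ (r + 1))

open Filter Topology

lemma one_sub_ne_zero_of_norm_lt {y : ℂ} (hy : ‖y‖ < 1) : 1 - y ≠ 0 := by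
  intro h
  rw [← sub_eq_zero.mp h, norm_one] at hy
  exact lt_irrefl _ hy

lemma norm_mul_pow_le {q x : ℂ} (hq : ‖q‖ < 1) (k : ℕ) : ‖x * q ^ k‖ ≤ ‖x‖ := by
  rw [norm_mul, norm_pow]
  exact mul_le_of_le_one_right (norm_nonneg _) (pow_le_one₀ (norm_nonneg _) hq.le)

lemma one_sub_pow_succ_ne_zero {q : ℂ} (hq : ‖q‖ < 1) (n : ℕ) : 1 - q ^ (n + 1) ≠ 0 := by
  apply one_sub_ne_zero_of_norm_lt
  rw [norm_pow]
  exact pow_lt_one₀ (norm_nonneg _) hq n.succ_ne_zero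

lemma qPoch_ne_zero {q : ℂ} (hq : ‖q‖ < 1) (n : ℕ) : qPoch q n ≠ 0 :=
  Finset.prod_ne_zero_iff.mpr fun r _ => one_sub_pow_succ_ne_zero hq r

lemma qPoch_succ (q : ℂ) (n : ℕ) : qPoch q (n + 1) = qPoch q n * (1 - q ^ (n + 1)) :=
  Finset.prod_range_succ _ _

lemma summable_qExp {q x : ℂ} (hq : ‖q‖ < 1) (hx : ‖x‖ < 1) :
    Summable (fun n : ℕ => x ^ n / qPoch q n) := by
  obtain ⟨r, hxr, hr⟩ := exists_between hx
  have hlim : Tendsto (fun n : ℕ => ‖x / (1 - q ^ (n + 1))‖) atTop (𝓝 ‖x‖) := by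
    have h1 := (tendsto_pow_atTop_nhds_zero_of_norm_lt_one hq).comp (tendsto_add_atTop_nat 1)
    have h2 := ((tendsto_const_nhds (x := x)).div ((tendsto_const_nhds (x := (1 : ℂ))).sub h1)
      (by simp)).norm
    simpa using h2
  refine summable_of_ratio_norm_eventually_le hr ?_
  filter_upwards [hlim.eventually (gt_mem_nhds hxr)] with n hn
  have : x ^ (n + 1) / qPoch q (n + 1) = x / (1 - q ^ (n + 1)) * (x ^ n / qPoch q n) := by
    rw [qPoch_succ, pow_succ, div_mul_div_comm, mul_comm x, mul_comm (qPoch q n)]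
  rw [this, norm_mul]
  exact mul_le_mul_of_nonneg_right hn.le (norm_nonneg _)

/-- The `q`-difference equation `F(x) = (1 - x)⁻¹ F(xq)`. -/
lemma qExp_functional_eq {q x : ℂ} (hq : ‖q‖ < 1) (hx : ‖x‖ < 1) :
    (∑' n : ℕ, x ^ n / qPoch q n) = (1 - x)⁻¹ * ∑' n : ℕ, (x * q) ^ n / qPoch q n := by
  have hs := summable_qExp hq hx
  have hs' : Summable (fun n : ℕ => (x * q) ^ n / qPoch q n) :=
    summable_qExp hq (lt_of_le_of_lt (by simpa using norm_mul_pow_le (x := x) hq 1) hx)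
  have key : (∑' n : ℕ, x ^ n / qPoch q n) - ∑' n : ℕ, (x * q) ^ n / qPoch q n
      = x * ∑' n : ℕ, x ^ n / qPoch q n := by
    rw [← hs.tsum_sub hs', (hs.sub hs').tsum_eq_zero_add, ← tsum_mul_left]
    simp only [pow_zero, sub_self, zero_add]
    refine tsum_congr fun n => ?_
    have h1 := qPoch_ne_zero hq n
    have h2 := one_sub_pow_succ_ne_zero hq n
    rw [qPoch_succ]
    field_simp
    ring
  rw [eq_inv_mul_iff_mul_eq₀ (one_sub_ne_zero_of_norm_lt hx)]
  linear_combination key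

lemma qExp_eq_prod_mul {q x : ℂ} (hq : ‖q‖ < 1) (hx : ‖x‖ < 1) (N : ℕ) :
    (∑' n : ℕ, x ^ n / qPoch q n) =
      (∏ k ∈ Finset.range N, (1 - x * q ^ k)⁻¹) * ∑' n : ℕ, (x * q ^ N) ^ n / qPoch q n := by
  induction N with
  | zero => simp
  | succ N ih =>
    rw [ih, qExp_functional_eq hq ((norm_mul_pow_le hq N).trans_lt hx), Finset.prod_range_succ,
      pow_succ]
    simp only [mul_assoc]

/-- `F(x q ^ N) → F(0) = 1`, the terms being dominated by those of `F(x)`. -/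
lemma tendsto_qExp {q x : ℂ} (hq : ‖q‖ < 1) (hx : ‖x‖ < 1) :
    Tendsto (fun N : ℕ => ∑' n : ℕ, (x * q ^ N) ^ n / qPoch q n) atTop (𝓝 1) := by
  have h0 : (∑' n : ℕ, (0 : ℂ) ^ n / qPoch q n) = 1 := by
    rw [tsum_eq_single 0 fun n hn => by simp [hn]]
    simp [qPoch]
  rw [← h0]
  refine tendsto_tsum_of_dominated_convergence (summable_qExp hq hx).norm (fun n => ?_)
    (Eventually.of_forall fun N n => ?_)
  · have h := (tendsto_pow_atTop_nhds_zero_of_norm_lt_one hq).const_mul x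
    rw [mul_zero] at h
    exact (h.pow n).div_const _
  · rw [norm_div, norm_div, norm_pow, norm_pow]
    gcongr
    exact norm_mul_pow_le hq N

lemma multipliable_inv_one_sub {q x : ℂ} (hq : ‖q‖ < 1) (hx : ‖x‖ < 1) :
    Multipliable (fun k : ℕ => (1 - x * q ^ k)⁻¹) := by
  have hne (k : ℕ) : 1 - x * q ^ k ≠ 0 :=
    one_sub_ne_zero_of_norm_lt ((norm_mul_pow_le hq k).trans_lt hx)
  have heq : (fun k : ℕ => (1 - x * q ^ k)⁻¹) =
      fun k : ℕ => 1 + x * q ^ k / (1 - x * q ^ k) := by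
    funext k
    have := hne k
    field_simp
    ring
  rw [heq]
  refine multipliable_one_add_of_summable (Summable.of_nonneg_of_le (fun _ => norm_nonneg _)
    (fun k => ?_)
    (((summable_geometric_of_lt_one (norm_nonneg q) hq).mul_left ‖x‖).div_const (1 - ‖x‖)))
  have hpos : 0 < 1 - ‖x‖ := sub_pos.mpr hx
  have hlow : 1 - ‖x‖ ≤ ‖1 - x * q ^ k‖ := by
    have h1 := norm_sub_norm_le (1 : ℂ) (x * q ^ k)
    have h2 := norm_mul_pow_le (x := x) hq k
    rw [norm_one] at h1
    linarith
  rw [norm_div, norm_mul, norm_pow]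
  gcongr

/-- Euler's q-exponential identity:
`∑_{n≥0} x^n/(q;q)_n = ∏_{k≥0} (1 - x q^k)⁻¹` for `|q| < 1`, `|x| < 1`,
both the series and the infinite product being convergent. -/
theorem euler_q_exponential (q x : ℂ) (hq : ‖q‖ < 1) (hx : ‖x‖ < 1) :
    Summable (fun n : ℕ => x ^ n / qPoch q n) ∧
    Multipliable (fun k : ℕ => (1 - x * q ^ k)⁻¹) ∧
    (∑' n : ℕ, x ^ n / qPoch q n) = ∏' k : ℕ, (1 - x * q ^ k)⁻¹ := by
  have hP : Multipliable (fun k : ℕ => (1 - x * q ^ k)⁻¹) := multipliable_inv_one_sub hq hx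
  refine ⟨summable_qExp hq hx, hP, ?_⟩
  have h := hP.hasProd.tendsto_prod_nat.mul (tendsto_qExp hq hx)
  rw [mul_one] at h
  refine tendsto_nhds_unique (tendsto_const_nhds.congr fun N => ?_) h
  exact qExp_eq_prod_mul hq hx N
end

section
/- Let q, x be complex numbers with |q| < 1 and |x| < 1. Then the series ∑_{l=1}^∞ x^l/(l(1-q^l)) converges absolutely and ∏_{k=0}^∞ (1 - x q^k)^{-1} = exp(∑_{l=1}^∞ x^l/(l(1-q^l))). -/
/-!
Expanding `-log (1 - x q^k) = ∑_{l ≥ 1} (x q^k)^l / l` and summing over `k` gives the double series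
with terms `(x q^k)^l / l`. It converges absolutely, being dominated by `‖x‖^l ‖q‖^k`
(`summable_qterm`). Summed over `k` first, the geometric series turns it into
`∑_l x^l / (l (1 - q^l))`; summed over `l` first, it is `-∑_k log (1 - x q^k)`. Both sums therefore
agree, and exponentiating yields the product.
-/

lemma summable_qterm {q x : ℂ} (hq : ‖q‖ < 1) (hx : ‖x‖ < 1) :
    Summable (fun p : ℕ × ℕ => (x * q ^ p.2) ^ (p.1 + 1) / (p.1 + 1 : ℂ)) := by
  have hs : Summable (fun p : ℕ × ℕ => ‖x‖ ^ p.1 * ‖q‖ ^ p.2) :=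
    (summable_geometric_of_lt_one (norm_nonneg x) hx).mul_of_nonneg
      (summable_geometric_of_lt_one (norm_nonneg q) hq)
      (fun _ => by positivity) (fun _ => by positivity)
  refine hs.of_norm_bounded fun ⟨l, k⟩ => ?_
  have hn : ‖(l + 1 : ℂ)‖ = (l + 1 : ℝ) := by
    exact_mod_cast Complex.norm_natCast (l + 1)
  simp only [norm_div, norm_pow, norm_mul, hn]
  have hqk : ‖q‖ ^ k ≤ 1 := pow_le_one₀ (norm_nonneg q) hq.le
  calc (‖x‖ * ‖q‖ ^ k) ^ (l + 1) / (l + 1 : ℝ)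
      ≤ (‖x‖ * ‖q‖ ^ k) ^ (l + 1) := div_le_self (by positivity) (by linarith [l.cast_nonneg (α := ℝ)])
    _ = ‖x‖ ^ (l + 1) * (‖q‖ ^ k) ^ (l + 1) := mul_pow _ _ _
    _ ≤ ‖x‖ ^ l * ‖q‖ ^ k := by
        gcongr ?_ * ?_
        · exact pow_le_pow_of_le_one (norm_nonneg x) hx.le l.le_succ
        · exact pow_le_of_le_one (by positivity) hqk l.succ_ne_zero

lemma hasSum_qterm_geometric {q : ℂ} (x : ℂ) (hq : ‖q‖ < 1) (l : ℕ) :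
    HasSum (fun k : ℕ => (x * q ^ k) ^ (l + 1) / (l + 1 : ℂ))
      (x ^ (l + 1) / ((l + 1 : ℂ) * (1 - q ^ (l + 1)))) := by
  have hql : ‖q ^ (l + 1)‖ < 1 := by
    rw [norm_pow]
    exact pow_lt_one₀ (norm_nonneg q) hq l.succ_ne_zero
  have h := (hasSum_geometric_of_norm_lt_one hql).mul_left (x ^ (l + 1) / (l + 1 : ℂ))
  have hterm (k : ℕ) : x ^ (l + 1) / (l + 1 : ℂ) * (q ^ (l + 1)) ^ k =
      (x * q ^ k) ^ (l + 1) / (l + 1 : ℂ) := by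
    rw [mul_pow, ← pow_mul, ← pow_mul, mul_comm k]
    ring
  simp only [hterm] at h
  rwa [← div_eq_mul_inv, div_div] at h

lemma hasSum_neg_log_one_sub {z : ℂ} (hz : ‖z‖ < 1) :
    HasSum (fun l : ℕ => z ^ (l + 1) / (l + 1 : ℂ)) (-Complex.log (1 - z)) := by
  simpa using (hasSum_nat_add_iff' 1).mpr (Complex.hasSum_taylorSeries_neg_log hz)

/-- For `|q| < 1`, `|x| < 1`, the series `∑_{l≥1} x^l/(l(1-q^l))` converges
absolutely and `∏_{k≥0} (1 - x q^k)⁻¹ = exp(∑_{l≥1} x^l/(l(1-q^l)))`. -/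
theorem qproduct_eq_exp (q x : ℂ) (hq : ‖q‖ < 1) (hx : ‖x‖ < 1) :
    Summable (fun l : ℕ => ‖x ^ (l + 1) / ((l + 1 : ℂ) * (1 - q ^ (l + 1)))‖) ∧
    (∏' k : ℕ, (1 - x * q ^ k))⁻¹ =
      Complex.exp (∑' l : ℕ, x ^ (l + 1) / ((l + 1 : ℂ) * (1 - q ^ (l + 1)))) := by
  have hz (k : ℕ) : ‖x * q ^ k‖ < 1 := by
    rw [norm_mul, norm_pow]
    exact mul_lt_one_of_nonneg_of_lt_one_left (norm_nonneg x) hx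
      (pow_le_one₀ (norm_nonneg q) hq.le)
  have hne (k : ℕ) : 1 - x * q ^ k ≠ 0 := by
    intro h
    have := hz k
    rw [← sub_eq_zero.mp h, norm_one] at this
    exact lt_irrefl _ this
  have hF := (summable_qterm hq hx).hasSum
  set S := ∑' p : ℕ × ℕ, (x * q ^ p.2) ^ (p.1 + 1) / (p.1 + 1 : ℂ)
  have hL : HasSum (fun l : ℕ => x ^ (l + 1) / ((l + 1 : ℂ) * (1 - q ^ (l + 1)))) S :=
    hF.prod_fiberwise (hasSum_qterm_geometric x hq)
  have hF' : HasSum (fun p : ℕ × ℕ => (x * q ^ p.1) ^ (p.2 + 1) / (p.2 + 1 : ℂ)) S :=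
    (Equiv.prodComm ℕ ℕ).hasSum_iff.mpr hF
  have hK : HasSum (fun k : ℕ => -Complex.log (1 - x * q ^ k)) S := by
    have hfib (k : ℕ) : HasSum (fun l : ℕ => (x * q ^ k) ^ (l + 1) / (l + 1 : ℂ))
        (-Complex.log (1 - x * q ^ k)) := hasSum_neg_log_one_sub (hz k)
    exact hF'.prod_fiberwise hfib
  refine ⟨hL.summable.norm, ?_⟩
  have hlog := hK.neg
  simp only [neg_neg] at hlog
  rw [hL.tsum_eq, (Complex.hasProd_of_hasSum_log hne hlog).tprod_eq, Complex.exp_neg, inv_inv]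
end

section
/- Let q be a complex number with 0 < |q| < 1. Define functions g_r on the open unit disc recursively by g_0 := E_q and g_{r+1}(x) := g_r(x) − q^{−r}·g_r(qx). Then for every natural number m and every complex x with |x| < 1, g_m(x) = x^m·E_q(x). (This is the identity ∏_{r=0}^{m−1}(1 − q^{−r} q^{X∂_X}) I^K_{pt} = X^m I^K_{pt}, the key step in the proof of Theorem 2.) -/
/-!
Write `E_q(x) = exp (S x)` with `S x = ∑_{k≥1} x^k / (k (1 - q^k))`. Since
`x^k - (q x)^k = (1 - q^k) x^k`, the difference `S x - S (q x)` is `∑_{k≥1} x^k / k = -log (1 - x)`,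
so `E_q(q x) = (1 - x) E_q(x)`. If `g_r(x) = x^r E_q(x)` on the disc, then
`g_{r+1}(x) = x^r E_q(x) - q^{-r} (q x)^r (1 - x) E_q(x) = x^{r+1} E_q(x)`, and induction on `r`
gives the result.
-/

/-- The q-exponential `E_q(x) = exp(∑_{k≥1} x^k/(k(1-q^k)))`, defined for `|x| < 1`. -/
noncomputable def qExp (q x : ℂ) : ℂ :=
  Complex.exp (∑' k : ℕ, x ^ (k + 1) / ((k + 1 : ℂ) * (1 - q ^ (k + 1))))

lemma one_sub_norm_le_norm_one_sub_pow {q : ℂ} (hq : ‖q‖ < 1) (k : ℕ) :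
    1 - ‖q‖ ≤ ‖1 - q ^ (k + 1)‖ := by
  have h1 : ‖q ^ (k + 1)‖ ≤ ‖q‖ := by
    rw [norm_pow]
    exact pow_le_of_le_one (norm_nonneg q) hq.le (Nat.succ_ne_zero k)
  have h2 := norm_sub_norm_le (1 : ℂ) (q ^ (k + 1))
  rw [norm_one] at h2
  linarith

/-- The terms are dominated by the geometric series `‖x‖^k / (1 - ‖q‖)`. -/
lemma summable_qExp_exponent {q x : ℂ} (hq : ‖q‖ < 1) (hx : ‖x‖ < 1) :
    Summable fun k : ℕ => x ^ (k + 1) / ((k + 1 : ℂ) * (1 - q ^ (k + 1))) := by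
  refine Summable.of_norm_bounded (g := fun k : ℕ => ‖x‖ ^ k / (1 - ‖q‖))
    ((summable_geometric_of_lt_one (norm_nonneg x) hx).div_const _) fun k => ?_
  have hk : (1 : ℝ) ≤ ‖(k + 1 : ℂ)‖ := by
    rw [← Nat.cast_succ, Complex.norm_natCast]
    exact_mod_cast Nat.succ_le_succ (Nat.zero_le k)
  have hd := one_sub_norm_le_norm_one_sub_pow hq k
  have hpos : 0 < 1 - ‖q‖ := sub_pos.2 hq
  rw [norm_div, norm_mul, norm_pow]
  refine div_le_div₀ (by positivity) ?_ hpos ?_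
  · exact pow_le_pow_of_le_one (norm_nonneg x) hx.le (Nat.le_succ k)
  · nlinarith

/-- The `q`-difference equation of the `q`-exponential. -/
lemma qExp_mul_left {q x : ℂ} (hq : ‖q‖ < 1) (hx : ‖x‖ < 1) (hqx : ‖q * x‖ < 1) :
    qExp q (q * x) = (1 - x) * qExp q x := by
  have hlog : HasSum (fun k : ℕ => x ^ (k + 1) / (k + 1 : ℂ)) (-Complex.log (1 - x)) := by
    have h := (hasSum_nat_add_iff' 1).2 (Complex.hasSum_taylorSeries_neg_log hx)
    simpa using h
  have hdiff := (summable_qExp_exponent hq hx).hasSum.sub (summable_qExp_exponent hq hqx).hasSum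
  have hterm : ∀ k : ℕ, x ^ (k + 1) / ((k + 1 : ℂ) * (1 - q ^ (k + 1)))
      - (q * x) ^ (k + 1) / ((k + 1 : ℂ) * (1 - q ^ (k + 1))) = x ^ (k + 1) / (k + 1 : ℂ) := by
    intro k
    have hk : (k + 1 : ℂ) ≠ 0 := Nat.cast_add_one_ne_zero k
    have hd : 1 - q ^ (k + 1) ≠ 0 :=
      norm_pos_iff.1 ((sub_pos.2 hq).trans_le (one_sub_norm_le_norm_one_sub_pow hq k))
    rw [mul_pow, ← sub_div, div_eq_div_iff (mul_ne_zero hk hd) hk]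
    ring
  simp only [hterm] at hdiff
  have hS := hdiff.unique hlog
  have hx1 : 1 - x ≠ 0 := by
    intro h
    rw [← sub_eq_zero.1 h, norm_one] at hx
    exact lt_irrefl _ hx
  unfold qExp
  rw [← Complex.exp_log hx1, ← Complex.exp_add]
  congr 1
  linear_combination -hS


/-- The identity `∏_{r=0}^{m−1}(1 − q^{−r} q^{X∂_X}) I^K_{pt} = X^m I^K_{pt}`,
the key step in the proof of Theorem 2: if `g_0 = E_q` and
`g_{r+1}(x) = g_r(x) − q^{−r}·g_r(qx)` on the open unit disc, then
`g_m(x) = x^m·E_q(x)` for all `m` and all `|x| < 1`. -/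
theorem qExp_difference_chain (q : ℂ) (hq0 : 0 < ‖q‖) (hq : ‖q‖ < 1)
    (g : ℕ → ℂ → ℂ)
    (h0 : ∀ x : ℂ, ‖x‖ < 1 → g 0 x = qExp q x)
    (hrec : ∀ (r : ℕ) (x : ℂ), ‖x‖ < 1 →
      g (r + 1) x = g r x - q ^ (-(r : ℤ)) * g r (q * x)) :
    ∀ (m : ℕ) (x : ℂ), ‖x‖ < 1 → g m x = x ^ m * qExp q x := by
  intro m
  induction m with
  | zero =>
    intro x hx
    rw [h0 x hx, pow_zero, one_mul]
  | succ r ih =>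
    intro x hx
    have hqx : ‖q * x‖ < 1 := by
      rw [norm_mul]
      exact mul_lt_one_of_nonneg_of_lt_one_left (norm_nonneg q) hq hx.le
    have hcancel : q ^ (-(r : ℤ)) * q ^ r = 1 := by
      rw [zpow_neg, zpow_natCast]
      exact inv_mul_cancel₀ (pow_ne_zero r (norm_pos_iff.1 hq0))
    rw [hrec r x hx, ih x hx, ih (q * x) hqx, qExp_mul_left hq hx hqx, mul_pow]
    linear_combination (-(x ^ r * (1 - x) * qExp q x)) * hcancel
end

section
/- Let K, N ≥ 1, let (m_{ij}) be a K×N integer matrix, let p ∈ ℝ^K and Q ∈ ℝ^K with all Q_i > 0, and set u_j(p) := ∑_{i=1}^K p_i·m_{ij}. Then the following are equivalent: (a) there exists x ∈ ℝ^N with all x_j > 0 satisfying the constraints ∏_{j=1}^N x_j^{m_{ij}} = Q_i for all i and such that all partial derivatives of the auxiliary function f(x) = ∑_j x_j − ∑_i p_i(∑_j m_{ij}·log x_j − log Q_i) vanish at x; (b) u_j(p) > 0 for all j and Q_i = ∏_{j=1}^N u_j(p)^{m_{ij}} for all i. (This identifies the Lagrangian variety generated by the Hori–Vafa phase functions with the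 variety cut out by the Batyrev relations.) -/
/-!
The multipliers `p` enter the phase function only through
`∑_i p_i ∑_j m_{ij} log x_j = ∑_j u_j(p) log x_j`, so at a point with positive coordinates
`∂f/∂x_j = 1 - u_j(p) / x_j` (`hasDerivAt_hvPhase_update`). Hence a positive `x` is critical
exactly when `x_j = u_j(p)` for all `j` (`deriv_hvPhase_update_eq_zero_iff`): the critical point is
forced to be `u(p)`, its positivity is the positivity of the `u_j(p)`, and substituting it into the
constraints gives the Batyrev relations.
-/

/-- The toric divisor class `u_j(p) = ∑_i p_i m_{ij}`. -/
def toricU (K N : ℕ) (mmat : Fin K → Fin N → ℤ) (p : Fin K → ℝ) (j : Fin N) : ℝ :=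
  ∑ i, p i * (mmat i j : ℝ)

/-- The Hori–Vafa phase function with Lagrange multipliers:
`f(x) = ∑_j x_j − ∑_i p_i (∑_j m_{ij} log x_j − log Q_i)`. -/
noncomputable def hvPhase (K N : ℕ) (mmat : Fin K → Fin N → ℤ)
    (p Q : Fin K → ℝ) (x : Fin N → ℝ) : ℝ :=
  (∑ j, x j) - ∑ i, p i * ((∑ j, (mmat i j : ℝ) * Real.log (x j)) - Real.log (Q i))

/-- The partial derivative of the phase function in the `j`-th coordinate is `1 - u_j(p) / x_j`,
at any point whose coordinates are all nonzero. -/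
theorem hasDerivAt_hvPhase_update (K N : ℕ) (mmat : Fin K → Fin N → ℤ)
    (p Q : Fin K → ℝ) (x : Fin N → ℝ) (hx : ∀ j, x j ≠ 0) (j : Fin N) :
    HasDerivAt (fun t => hvPhase K N mmat p Q (Function.update x j t))
      (1 - toricU K N mmat p j / x j) (x j) := by
  have hupd : ∀ k, HasDerivAt (fun t => Function.update x j t k)
      ((Pi.single j 1 : Fin N → ℝ) k) (x j) :=
    hasDerivAt_pi.1 (hasDerivAt_update x j (x j))
  have hlog : ∀ k, HasDerivAt (fun t => Real.log (Function.update x j t k))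
      ((Pi.single j 1 : Fin N → ℝ) k / x k) (x j) := by
    intro k
    have h := (hupd k).log (by simpa using hx k)
    simpa using h
  have h := (HasDerivAt.fun_sum (u := Finset.univ) fun k _ => hupd k).sub
    (HasDerivAt.fun_sum (u := Finset.univ) fun i _ =>
      ((HasDerivAt.fun_sum (u := Finset.univ) fun k _ =>
        (hlog k).const_mul (mmat i k : ℝ)).sub_const (Real.log (Q i))).const_mul (p i))
  refine h.congr_deriv ?_
  simp [toricU, Pi.single_apply, div_eq_mul_inv, Finset.sum_mul, mul_assoc]

theorem deriv_hvPhase_update_eq_zero_iff (K N : ℕ) (mmat : Fin K → Fin N → ℤ)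
    (p Q : Fin K → ℝ) (x : Fin N → ℝ) (hx : ∀ j, x j ≠ 0) (j : Fin N) :
    deriv (fun t => hvPhase K N mmat p Q (Function.update x j t)) (x j) = 0 ↔
      x j = toricU K N mmat p j := by
  rw [(hasDerivAt_hvPhase_update K N mmat p Q x hx j).deriv, sub_eq_zero, eq_div_iff (hx j),
    one_mul]

/-- The Lagrangian variety generated by the Hori–Vafa phase functions coincides
with the variety cut out by the Batyrev relations: a critical point of the
auxiliary function subject to the constraints `∏_j x_j^{m_{ij}} = Q_i` exists
iff `u_j(p) > 0` for all `j` and `Q_i = ∏_j u_j(p)^{m_{ij}}` for all `i`. -/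
theorem hvPhase_critical_iff_batyrev (K N : ℕ) (hK : 1 ≤ K) (hN : 1 ≤ N)
    (mmat : Fin K → Fin N → ℤ) (p Q : Fin K → ℝ) (hQ : ∀ i, 0 < Q i) :
    (∃ x : Fin N → ℝ, (∀ j, 0 < x j) ∧
      (∀ i, ∏ j, x j ^ mmat i j = Q i) ∧
      (∀ j : Fin N,
        deriv (fun t => hvPhase K N mmat p Q (Function.update x j t)) (x j) = 0)) ↔
    ((∀ j, 0 < toricU K N mmat p j) ∧
      ∀ i, Q i = ∏ j, toricU K N mmat p j ^ mmat i j) := by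
  constructor
  · rintro ⟨x, hpos, hcon, hcrit⟩
    obtain rfl : x = toricU K N mmat p := funext fun j =>
      (deriv_hvPhase_update_eq_zero_iff K N mmat p Q x (fun k => (hpos k).ne') j).1 (hcrit j)
    exact ⟨hpos, fun i => (hcon i).symm⟩
  · rintro ⟨hpos, hbat⟩
    exact ⟨toricU K N mmat p, hpos, fun i => (hbat i).symm, fun j =>
      (deriv_hvPhase_update_eq_zero_iff K N mmat p Q _ (fun k => (hpos k).ne') j).2 rfl⟩
end

section
/- Let K, N ≥ 1, let (m_{ij}) be a K×N integer matrix, let m ≥ 1 be an integer, let p ∈ ℝ^K, Q ∈ ℝ^K with all Q_i > 0, and set u_j(p) := ∑_{i=1}^K p_i·m_{ij}. Define φ(X) := ∑_{j=1}^N ∑_{l=1}^∞ X_j^{lm}/(l²m²) − ∑_{i=1}^K p_i·(∑_{j=1}^N m_{ij}·log X_j − log Q_i) for X ∈ ℝ^N with 0 < X_j < 1 for all j. Then for such X and each j, the partial derivative ∂φ/∂X_j(X) exists and vanishes if and only if 1 − X_j^m = exp(−m·u_j(p)). (This is the critical-point computation for the K-theoretic mirror phase near a primitive m-th root of unity; in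 the notation P_i = e^{−p_i}, U_j = ∏_i P_i^{m_{ij}}, the critical equation reads 1 − X_j^m = U_j^m.) -/
/-!
The polylogarithmic part of the phase is `∑_j Li₂(X_j^m) / m²`, where
`Li₂(y) = ∑_{l ≥ 1} y^l / l²`. On every disc `|y| < r < 1` the differentiated series
`∑ y^(l-1) / l` is dominated by the geometric series `∑ r^(l-1)`, so it may be summed to
`Li₂'(y) = -log (1 - y) / y` (`hasDerivAt_dilog_series`); the chain rule gives
the derivative of each summand (`hasDerivAt_phase_series`). The remaining part of the phase is
linear in the logarithms `log X_j`, with coefficient `u_j(p)`.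

Multiplying the partial derivative by `m X_j > 0` turns its vanishing into
`log (1 - X_j^m) = -m u_j(p)`, and exponentiating gives the critical equation.
-/

lemma hasDerivAt_dilog_series {y : ℝ} (h0 : 0 < y) (h1 : y < 1) :
    HasDerivAt (fun z : ℝ => ∑' l : ℕ, z ^ (l + 1) / ((l : ℝ) + 1) ^ 2)
      (-Real.log (1 - y) / y) y := by
  obtain ⟨r, hyr, hr1⟩ := exists_between h1
  have hr0 : 0 < r := h0.trans hyr
  have hmem : y ∈ Metric.ball (0 : ℝ) r := by
    rw [mem_ball_zero_iff, Real.norm_eq_abs, abs_of_pos h0]; exact hyr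
  have key := hasDerivAt_tsum_of_isPreconnected (𝕜 := ℝ) (F := ℝ)
    (g := fun (l : ℕ) (z : ℝ) => z ^ (l + 1) / ((l : ℝ) + 1) ^ 2)
    (g' := fun (l : ℕ) (z : ℝ) => z ^ l / ((l : ℝ) + 1))
    (u := fun l : ℕ => r ^ l) (t := Metric.ball (0 : ℝ) r) (y₀ := 0) (y := y)
    (summable_geometric_of_lt_one hr0.le hr1) Metric.isOpen_ball
    (convex_ball (0 : ℝ) r).isPreconnected ?_ ?_ (Metric.mem_ball_self hr0) ?_ hmem
  · have hs : HasSum (fun l : ℕ => y ^ l / ((l : ℝ) + 1)) (-Real.log (1 - y) / y) := by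
      have h := (Real.hasSum_pow_div_log_of_abs_lt_one
        (by rwa [abs_of_pos h0] : |y| < 1)).div_const y
      have hf : (fun l : ℕ => y ^ l / ((l : ℝ) + 1)) =
          fun l : ℕ => y ^ (l + 1) / ((l : ℝ) + 1) / y := by
        funext l
        have hl : (l : ℝ) + 1 ≠ 0 := by positivity
        rw [pow_succ]
        field_simp
      rwa [hf]
    rwa [hs.tsum_eq] at key
  · intro l z _
    have hl : (l : ℝ) + 1 ≠ 0 := by positivity
    have h := (hasDerivAt_pow (l + 1) z).div_const (((l : ℝ) + 1) ^ 2)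
    refine h.congr_deriv ?_
    rw [Nat.add_sub_cancel]
    push_cast
    field_simp
  · intro l z hz
    rw [mem_ball_zero_iff] at hz
    rw [norm_div, norm_pow, Real.norm_of_nonneg (by positivity : (0 : ℝ) ≤ (l : ℝ) + 1)]
    calc ‖z‖ ^ l / ((l : ℝ) + 1) ≤ ‖z‖ ^ l :=
          div_le_self (by positivity) (by linarith [(Nat.cast_nonneg l : (0 : ℝ) ≤ l)])
      _ ≤ r ^ l := by gcongr
  · simp

/-- Chain rule for `∑_l t^(lm) / (l² m²) = Li₂(t^m) / m²`. -/
lemma hasDerivAt_phase_series {m : ℕ} (hm : 1 ≤ m) {x : ℝ} (h0 : 0 < x) (h1 : x < 1) :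
    HasDerivAt
      (fun t : ℝ => ∑' l : ℕ, t ^ ((l + 1) * m) / (((l : ℝ) + 1) ^ 2 * (m : ℝ) ^ 2))
      (-Real.log (1 - x ^ m) / ((m : ℝ) * x)) x := by
  have hm0 : (m : ℝ) ≠ 0 := by positivity
  have hli := hasDerivAt_dilog_series (pow_pos h0 m) (pow_lt_one₀ h0.le h1 (by omega))
  have hpow : HasDerivAt (fun t : ℝ => t ^ m) ((m : ℝ) * x ^ (m - 1)) x := hasDerivAt_pow m x
  have h := (HasDerivAt.comp (h := fun t : ℝ => t ^ m) x hli hpow).div_const ((m : ℝ) ^ 2)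
  have hf : (fun t : ℝ => ∑' l : ℕ, t ^ ((l + 1) * m) / (((l : ℝ) + 1) ^ 2 * (m : ℝ) ^ 2)) =
      fun t : ℝ => (∑' l : ℕ, (t ^ m) ^ (l + 1) / ((l : ℝ) + 1) ^ 2) / (m : ℝ) ^ 2 := by
    funext t
    rw [← tsum_div_const]
    refine tsum_congr fun l => ?_
    rw [← pow_mul, mul_comm m, div_div]
  rw [hf]
  refine HasDerivAt.congr_deriv h ?_
  · obtain ⟨k, rfl⟩ : ∃ k, m = k + 1 := ⟨m - 1, by omega⟩
    rw [Nat.add_sub_cancel]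
    have hx : x ≠ 0 := h0.ne'
    rw [div_mul_eq_mul_div, div_div, div_eq_div_iff (by positivity) (by positivity)]
    ring

/-- In a sum of functions of separate coordinates, only the `j`-th summand depends on the
`j`-th coordinate. -/
lemma hasDerivAt_sum_update {N : ℕ} (F : Fin N → ℝ → ℝ) (X : Fin N → ℝ) (j : Fin N) {d : ℝ}
    (h : HasDerivAt (F j) d (X j)) :
    HasDerivAt (fun t => ∑ k, F k (Function.update X j t k)) d (X j) := by
  have hsum : (fun t => ∑ k, F k (Function.update X j t k)) =
      fun t => F j t + ∑ k ∈ Finset.univ.erase j, F k (X k) := by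
    funext t
    rw [← Finset.add_sum_erase _ _ (Finset.mem_univ j), Function.update_self]
    congr 1
    refine Finset.sum_congr rfl fun k hk => ?_
    rw [Function.update_of_ne (Finset.ne_of_mem_erase hk)]
  rw [hsum]
  exact h.add_const _


/-- The K-theoretic mirror phase (near a primitive `m`-th root of unity) with
Lagrange multipliers:
`φ(X) = ∑_j ∑_{l≥1} X_j^{lm}/(l²m²) − ∑_i p_i (∑_j m_{ij} log X_j − log Q_i)`. -/
noncomputable def kPhase (K N : ℕ) (mmat : Fin K → Fin N → ℤ) (m : ℕ)
    (p Q : Fin K → ℝ) (X : Fin N → ℝ) : ℝ :=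
  (∑ j, ∑' l : ℕ, X j ^ ((l + 1) * m) / (((l : ℝ) + 1) ^ 2 * (m : ℝ) ^ 2)) -
    ∑ i, p i * ((∑ j, (mmat i j : ℝ) * Real.log (X j)) - Real.log (Q i))

/-- The critical-point computation for the K-theoretic mirror phase near a
primitive `m`-th root of unity: at `X` with `0 < X_j < 1` for all `j`, the
partial derivative in `X_j` exists, equals `−log(1−X_j^m)/(m X_j) − u_j(p)/X_j`,
and vanishes iff `1 − X_j^m = exp(−m·u_j(p))`. -/
theorem kPhase_critical_points (K N : ℕ) (hK : 1 ≤ K) (hN : 1 ≤ N)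
    (mmat : Fin K → Fin N → ℤ) (m : ℕ) (hm : 1 ≤ m)
    (p Q : Fin K → ℝ) (hQ : ∀ i, 0 < Q i)
    (X : Fin N → ℝ) (hX : ∀ j, 0 < X j ∧ X j < 1) :
    ∀ j : Fin N,
      HasDerivAt (fun t => kPhase K N mmat m p Q (Function.update X j t))
        (-Real.log (1 - X j ^ m) / ((m : ℝ) * X j) - toricU K N mmat p j / X j) (X j) ∧
      ((-Real.log (1 - X j ^ m) / ((m : ℝ) * X j) - toricU K N mmat p j / X j = 0) ↔
        1 - X j ^ m = Real.exp (-(m : ℝ) * toricU K N mmat p j)) := by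
  intro j
  obtain ⟨h0, h1⟩ := hX j
  have hm0 : (0 : ℝ) < m := by exact_mod_cast hm
  have hpos : 0 < 1 - X j ^ m := by
    linarith [pow_lt_one₀ h0.le h1 (by omega : m ≠ 0)]
  constructor
  · have hseries := hasDerivAt_sum_update
      (fun _ t => ∑' l : ℕ, t ^ ((l + 1) * m) / (((l : ℝ) + 1) ^ 2 * (m : ℝ) ^ 2)) X j
      (hasDerivAt_phase_series hm h0 h1)
    have hlog : HasDerivAt (fun t => ∑ i, p i *
        ((∑ k, (mmat i k : ℝ) * Real.log (Function.update X j t k)) - Real.log (Q i)))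
        (∑ i, p i * ((mmat i j : ℝ) * (X j)⁻¹)) (X j) :=
      HasDerivAt.fun_sum fun i _ =>
        ((hasDerivAt_sum_update (fun k t => (mmat i k : ℝ) * Real.log t) X j
          ((Real.hasDerivAt_log h0.ne').const_mul _)).sub_const _).const_mul _
    have hu : toricU K N mmat p j / X j = ∑ i, p i * ((mmat i j : ℝ) * (X j)⁻¹) := by
      rw [toricU, Finset.sum_div]
      exact Finset.sum_congr rfl fun i _ => by ring
    rw [hu]
    exact hseries.sub hlog
  · have hcrit : (-Real.log (1 - X j ^ m) / ((m : ℝ) * X j) - toricU K N mmat p j / X j = 0) ↔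
        Real.log (1 - X j ^ m) = -(m : ℝ) * toricU K N mmat p j := by
      rw [sub_eq_zero, div_eq_div_iff (by positivity) h0.ne']
      constructor
      · intro h
        have := mul_right_cancel₀ h0.ne' (h.trans (by ring :
          _ = ((m : ℝ) * toricU K N mmat p j) * X j))
        linarith
      · intro h
        rw [h]
        ring
    rw [hcrit]
    constructor
    · intro h
      rw [← h, Real.exp_log hpos]
    · intro h
      rw [h, Real.log_exp]
end
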